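/- Let n be an arbitrary positive integer and λ an arbitrary infinite cardinal. Then every feebly compact shift-continuous T₁-topology τ on the semigroup 𝓘_λ^n is totally countably pracompact. -/

import Mathlib

/-!
For each pair `p` the set `{x | p ∈ x.graph}` is clopen: with `ε`, `φ` the rank-one idempotents on
the two coordinates of `p`, the continuous map `x ↦ ε * x * φ` takes the value `{p}` when
`p ∈ x.graph` and the value `0` otherwise, and points are closed. Hence the given topology refines
the topology of pointwise convergence of graphs, in which `𝓘_γ^n` sits as a compact, sequentially
compact subspace of `2^(γ × γ)`; in particular it is Hausdorff.

An element of maximal rank in an open set `U` is isolated, since it is the only element of `U`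
above it. So the set `D` of isolated points is dense. A sequence in `D` has a subsequence whose
graphs converge pointwise to that of some `α`. No other point can be an accumulation point of this
subsequence, so if infinitely many terms stayed outside a neighbourhood of `α`, their singletons
would be a locally finite family of open sets, finite by feeble compactness; some value other than
`α` would then be taken infinitely often, which pointwise convergence forbids. Thus the subsequence
converges to `α`, and its closure is compact.
-/

open Set Topology Filter

/-- The symmetric inverse semigroup `𝓘_γ^n` of partial bijections of the set `γ`
of rank `≤ n`, represented by their (finite) graphs. -/
structure SymInvSg (γ : Type*) (n : ℕ) where
  graph : Set (γ × γ)
  inj' : ∀ ⦃x y x' y'⦄, (x, y) ∈ graph → (x', y') ∈ graph → (x = x' ↔ y = y')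
  finite' : graph.Finite
  card_le' : graph.ncard ≤ n

namespace SymInvSg

variable {γ : Type*} {n : ℕ}

theorem ext' {a b : SymInvSg γ n} (h : a.graph = b.graph) : a = b := by
  cases a; cases b; simpa using h

/-- Composition of partial bijections (in the left-to-right convention of
transformation semigroups, the choice of convention being immaterial). -/
instance : Mul (SymInvSg γ n) where
  mul a b :=
    { graph := {p | ∃ y, (p.1, y) ∈ a.graph ∧ (y, p.2) ∈ b.graph}
      inj' := by
        rintro x z x' z' ⟨y, hxy, hyz⟩ ⟨y', hxy', hyz'⟩
        constructor
        · rintro rfl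
          have hy : y = y' := (a.inj' hxy hxy').mp rfl
          subst hy
          exact (b.inj' hyz hyz').mp rfl
        · rintro rfl
          have hy : y = y' := (b.inj' hyz hyz').mpr rfl
          subst hy
          exact (a.inj' hxy hxy').mpr rfl
      finite' := by
        have : {p : γ × γ | ∃ y, (p.1, y) ∈ a.graph ∧ (y, p.2) ∈ b.graph} ⊆
            (fun q : (γ × γ) × (γ × γ) => (q.1.1, q.2.2)) '' (a.graph ×ˢ b.graph) := by
          rintro ⟨x, z⟩ ⟨y, hxy, hyz⟩
          exact ⟨((x, y), (y, z)), ⟨hxy, hyz⟩, rfl⟩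
        exact Set.Finite.subset (Set.Finite.image _ (a.finite'.prod b.finite')) this
      card_le' := by
        have hinj : Set.InjOn Prod.fst
            {p : γ × γ | ∃ y, (p.1, y) ∈ a.graph ∧ (y, p.2) ∈ b.graph} := by
          rintro ⟨x, z⟩ ⟨y, hxy, hyz⟩ ⟨x', z'⟩ ⟨y', hxy', hyz'⟩ h
          simp only at h
          subst h
          have hy : y = y' := (a.inj' hxy hxy').mp rfl
          subst hy
          have hz : z = z' := (b.inj' hyz hyz').mp rfl
          simp [hz]
        calc ({p : γ × γ | ∃ y, (p.1, y) ∈ a.graph ∧ (y, p.2) ∈ b.graph}).ncard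
            ≤ (Prod.fst '' a.graph).ncard := by
              refine Set.ncard_le_ncard_of_injOn Prod.fst ?_ hinj (a.finite'.image _)
              rintro ⟨x, z⟩ hp
              exact ⟨(x, hp.choose), hp.choose_spec.1, rfl⟩
          _ ≤ a.graph.ncard := Set.ncard_image_le a.finite'
          _ ≤ n := a.card_le' }

theorem mul_graph (a b : SymInvSg γ n) :
    (a * b).graph = {p : γ × γ | ∃ y, (p.1, y) ∈ a.graph ∧ (y, p.2) ∈ b.graph} := rfl

instance : Semigroup (SymInvSg γ n) where
  mul_assoc a b c := by
    refine ext' ?_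
    simp only [mul_graph]
    ext ⟨x, w⟩
    constructor
    · rintro ⟨z, ⟨y, hxy, hyz⟩, hzw⟩
      exact ⟨y, hxy, z, hyz, hzw⟩
    · rintro ⟨y, hxy, z, hyz, hzw⟩
      exact ⟨z, ⟨y, hxy, hyz⟩, hzw⟩

/-- The zero of `𝓘_γ^n` is the empty partial map. -/
instance : Zero (SymInvSg γ n) :=
  ⟨{ graph := ∅
     inj' := by simp
     finite' := Set.finite_empty
     card_le' := by simp }⟩

/-- The natural partial order on the inverse semigroup `𝓘_γ^n`:
`α ≼ β` iff the graph of `α` is contained in the graph of `β`. -/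
instance : PartialOrder (SymInvSg γ n) where
  le a b := a.graph ⊆ b.graph
  le_refl a := subset_rfl
  le_trans a b c h₁ h₂ := Set.Subset.trans h₁ h₂
  le_antisymm a b h₁ h₂ := ext' (subset_antisymm h₁ h₂)

/-- The rank of a partial bijection: the cardinality of its domain
(equivalently, of its graph). -/
noncomputable def rank (a : SymInvSg γ n) : ℕ := a.graph.ncard

/-- `𝓘_A^n`: the subsemigroup of partial bijections with domain and range inside `A`. -/
def restrictedTo (A : Set γ) : Set (SymInvSg γ n) :=
  {α | ∀ p ∈ α.graph, p.1 ∈ A ∧ p.2 ∈ A}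

end SymInvSg

/-- A topology is shift-continuous when all left and right translations are continuous,
i.e. the space is a semitopological semigroup. -/
def ShiftContinuous (X : Type*) [TopologicalSpace X] [Mul X] : Prop :=
  ∀ a : X, Continuous (fun x => a * x) ∧ Continuous (fun x => x * a)

/-- A space is feebly compact if every locally finite family of nonempty open sets is finite. -/
def FeeblyCompact (X : Type*) [TopologicalSpace X] : Prop :=
  ∀ F : Set (Set X), (∀ U ∈ F, IsOpen U ∧ U.Nonempty) →
    LocallyFinite (fun U : F => (U : Set X)) → F.Finite

/-- A space is sequentially pracompact if it has a dense subset `D` such that every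
sequence in `D` has a convergent subsequence. -/
def SequentiallyPracompact (X : Type*) [TopologicalSpace X] : Prop :=
  ∃ D : Set X, Dense D ∧ ∀ u : ℕ → X, (∀ k, u k ∈ D) →
    ∃ (x : X) (φ : ℕ → ℕ), StrictMono φ ∧ Filter.Tendsto (u ∘ φ) Filter.atTop (nhds x)

/-- A space is totally countably pracompact if it has a dense subset `D` such that every
sequence in `D` has a subsequence whose closure is compact. -/
def TotallyCountablyPracompact (X : Type*) [TopologicalSpace X] : Prop :=
  ∃ D : Set X, Dense D ∧ ∀ u : ℕ → X, (∀ k, u k ∈ D) →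
    ∃ φ : ℕ → ℕ, StrictMono φ ∧ IsCompact (closure (Set.range (u ∘ φ)))

/-- A space is countably pracompact if it has a dense subset `A` such that every infinite
subset of `A` has an accumulation point in the space. -/
def CountablyPracompact (X : Type*) [TopologicalSpace X] : Prop :=
  ∃ A : Set X, Dense A ∧ ∀ B ⊆ A, B.Infinite → ∃ x : X, AccPt x (Filter.principal B)

/-- A space is ω-bounded-pracompact if it has a dense subset `D` such that every countable
subset of `D` has compact closure. -/
def OmegaBoundedPracompact (X : Type*) [TopologicalSpace X] : Prop :=
  ∃ D : Set X, Dense D ∧ ∀ C ⊆ D, C.Countable → IsCompact (closure C)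

/-- A space is feebly ω-bounded if for every sequence of nonempty open sets there is a
compact set meeting all of them. -/
def FeeblyOmegaBounded (X : Type*) [TopologicalSpace X] : Prop :=
  ∀ U : ℕ → Set X, (∀ k, IsOpen (U k) ∧ (U k).Nonempty) →
    ∃ K : Set X, IsCompact K ∧ ∀ k, (K ∩ U k).Nonempty

namespace SymInvSg

variable {γ : Type*} {n : ℕ}

/-- The rank-one partial bijection sending `a` to `b`. -/
def single (hn : 0 < n) (a b : γ) : SymInvSg γ n where
  graph := {(a, b)}
  inj' := by
    rintro x y x' y' h h'
    simp only [mem_singleton_iff, Prod.mk.injEq] at h h'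
    simp [h.1, h.2, h'.1, h'.2]
  finite' := Set.finite_singleton _
  card_le' := by simpa using Nat.succ_le_of_lt hn

theorem mem_sandwich (hn : 0 < n) (a b : γ) (x : SymInvSg γ n) (p : γ × γ) :
    p ∈ (single hn a a * x * single hn b b).graph ↔ p = (a, b) ∧ (a, b) ∈ x.graph := by
  obtain ⟨c, d⟩ := p
  simp only [mul_graph, single, mem_ofPred_eq, mem_singleton_iff, Prod.mk.injEq]
  constructor
  · rintro ⟨y, ⟨z, ⟨rfl, rfl⟩, h⟩, rfl, rfl⟩
    exact ⟨⟨rfl, rfl⟩, h⟩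
  · rintro ⟨⟨rfl, rfl⟩, h⟩
    exact ⟨d, ⟨c, ⟨rfl, rfl⟩, h⟩, rfl, rfl⟩

theorem isClopen_mem [TopologicalSpace (SymInvSg γ n)] [T1Space (SymInvSg γ n)]
    (hn : 0 < n) (hsc : ShiftContinuous (SymInvSg γ n)) (p : γ × γ) :
    IsClopen {x : SymInvSg γ n | p ∈ x.graph} := by
  obtain ⟨a, b⟩ := p
  have hc : Continuous fun x : SymInvSg γ n => single hn a a * x * single hn b b :=
    (hsc (single hn b b)).2.comp (hsc (single hn a a)).1
  constructor
  · convert (isClosed_singleton (x := single (n := n) hn a b)).preimage hc using 1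
    ext x
    simp only [mem_ofPred_eq, mem_preimage, mem_singleton_iff]
    constructor
    · intro h
      refine ext' (Set.ext fun q => ?_)
      rw [mem_sandwich]
      simp [single, h]
    · intro h
      have h1 : (a, b) ∈ (single hn a a * x * single hn b b).graph := by
        rw [h]; simp [single]
      exact ((mem_sandwich hn a b x _).1 h1).2
  · convert (isClosed_singleton (x := (0 : SymInvSg γ n))).isOpen_compl.preimage hc using 1
    ext x
    simp only [mem_ofPred_eq, mem_preimage, mem_compl_iff, mem_singleton_iff]
    constructor
    · intro h h0
      have h1 := (mem_sandwich hn a b x (a, b)).2 ⟨rfl, h⟩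
      rw [h0] at h1
      exact h1
    · intro h
      by_contra hx
      refine h (ext' (Set.ext fun q => ?_))
      rw [mem_sandwich]
      exact iff_of_false (fun h => hx h.2) (fun h => h)

theorem exists_mem_not_mem {a b : SymInvSg γ n} (h : a ≠ b) :
    ∃ p, ¬(p ∈ a.graph ↔ p ∈ b.graph) := by
  by_contra! hc
  exact h (ext' (Set.ext hc))

theorem t2Space [TopologicalSpace (SymInvSg γ n)] [T1Space (SymInvSg γ n)]
    (hn : 0 < n) (hsc : ShiftContinuous (SymInvSg γ n)) : T2Space (SymInvSg γ n) := by
  refine ⟨fun a b hab => ?_⟩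
  obtain ⟨p, hp⟩ := exists_mem_not_mem hab
  have hcl := isClopen_mem hn hsc p
  by_cases ha : p ∈ a.graph
  · exact ⟨_, _, hcl.isOpen, hcl.compl.isOpen, ha, fun hb => hp (iff_of_true ha hb),
      disjoint_compl_right⟩
  · exact ⟨_, _, hcl.compl.isOpen, hcl.isOpen, ha, by_contra fun hb => hp (iff_of_false ha hb),
      disjoint_compl_left⟩

theorem dense_isolated [TopologicalSpace (SymInvSg γ n)] [T1Space (SymInvSg γ n)]
    (hn : 0 < n) (hsc : ShiftContinuous (SymInvSg γ n)) :
    Dense {x : SymInvSg γ n | IsOpen {x}} := by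
  rw [dense_iff_inter_open]
  intro U hU hne
  -- ranks are bounded by `n`, so a rank-maximal element of `U` exists
  have hfin : (rank '' U).Finite :=
    (Set.finite_Iic n).subset (by rintro _ ⟨x, -, rfl⟩; exact x.card_le')
  obtain ⟨_, ⟨a, haU, rfl⟩, hmax'⟩ := Set.exists_max_image _ id hfin (hne.image rank)
  have hmax : ∀ x ∈ U, x.rank ≤ a.rank := fun x hx => hmax' _ ⟨x, hx, rfl⟩
  refine ⟨a, haU, ?_⟩
  have hup : IsOpen (⋂ p ∈ a.graph, {x : SymInvSg γ n | p ∈ x.graph}) :=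
    a.finite'.isOpen_biInter fun p _ => (isClopen_mem hn hsc p).isOpen
  change IsOpen {a}
  convert hU.inter hup using 1
  ext x
  simp only [mem_singleton_iff, mem_inter_iff, mem_iInter, mem_ofPred_eq]
  constructor
  · rintro rfl
    exact ⟨haU, fun p hp => hp⟩
  · rintro ⟨hx, hsub⟩
    exact (ext' (Set.eq_of_subset_of_ncard_le hsub (hmax x hx) x.finite')).symm

/-- Sequential compactness of `𝓘_γ^n` for pointwise convergence of graphs. -/
theorem exists_subseq (u : ℕ → SymInvSg γ n) :
    ∃ (a : SymInvSg γ n) (φ : ℕ → ℕ), StrictMono φ ∧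
      ∀ p, ∀ᶠ k in atTop, (p ∈ (u (φ k)).graph ↔ p ∈ a.graph) := by
  classical
  -- only countably many pairs occur, and `2^C` is sequentially compact for countable `C`
  let C : Set (γ × γ) := ⋃ k, (u k).graph
  have hC : C.Countable := Set.countable_iUnion fun k => (u k).finite'.countable
  have : Countable C := hC.to_subtype
  obtain ⟨f, φ, hφ, hlim⟩ := SeqCompactSpace.tendsto_subseq
    (fun (k : ℕ) (c : C) => decide ((c : γ × γ) ∈ (u k).graph))
  have hdec : ∀ p, (∀ᶠ k in atTop, p ∈ (u (φ k)).graph) ∨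
      ∀ᶠ k in atTop, p ∉ (u (φ k)).graph := by
    intro p
    by_cases hp : p ∈ C
    · have h1 := (tendsto_pi_nhds.1 hlim) ⟨p, hp⟩
      rw [nhds_discrete, tendsto_pure] at h1
      cases hf : f ⟨p, hp⟩
      · right
        filter_upwards [h1] with k hk
        simpa [hf] using hk
      · left
        filter_upwards [h1] with k hk
        simpa [hf] using hk
    · right
      exact Eventually.of_forall fun k hk => hp (mem_iUnion.2 ⟨_, hk⟩)
  let S : Set (γ × γ) := {p | ∀ᶠ k in atTop, p ∈ (u (φ k)).graph}
  have hcard : ∀ t : Finset (γ × γ), (t : Set (γ × γ)) ⊆ S → t.card ≤ n := by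
    intro t ht
    have h1 : ∀ᶠ k in atTop, ∀ p ∈ t, p ∈ (u (φ k)).graph :=
      (Filter.eventually_all_finset t).2 fun p hp => ht hp
    obtain ⟨k, hk⟩ := h1.exists
    rw [← Set.ncard_coe_finset]
    exact (Set.ncard_le_ncard hk (u (φ k)).finite').trans (u (φ k)).card_le'
  have hSfin : S.Finite := by
    by_contra hinf
    obtain ⟨t, ht, htc⟩ := Set.Infinite.exists_subset_card_eq hinf (n + 1)
    have := hcard t ht
    omega
  refine ⟨⟨S, ?_, hSfin, ?_⟩, φ, hφ, fun p => ?_⟩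
  · intro x y x' y' h h'
    obtain ⟨k, hk, hk'⟩ := (h.and h').exists
    exact (u (φ k)).inj' hk hk'
  · rw [Set.ncard_eq_toFinset_card S hSfin]
    exact hcard _ (by simp)
  · rcases hdec p with h | h
    · filter_upwards [h] with k hk
      exact iff_of_true hk h
    · filter_upwards [h] with k hk
      refine iff_of_false hk fun (h' : ∀ᶠ k in atTop, p ∈ (u (φ k)).graph) => ?_
      obtain ⟨j, hout, hin⟩ := (h.and h').exists
      exact hout hin

end SymInvSg

/-- A sequence of isolated points of a feebly compact space converges to `a` as soon as every point
other than `a` has a neighbourhood that the sequence eventually avoids. -/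
theorem FeeblyCompact.tendsto_of_isolated {X : Type*} [TopologicalSpace X] (hfc : FeeblyCompact X)
    {v : ℕ → X} (hv : ∀ k, IsOpen {v k}) {a : X}
    (ha : ∀ b, b ≠ a → ∃ W ∈ 𝓝 b, ∀ᶠ k in atTop, v k ∉ W) :
    Tendsto v atTop (𝓝 a) := by
  intro V hV
  by_contra hnot
  have hfreq : ∃ᶠ k in atTop, v k ∉ V :=
    fun h => hnot (h.mono fun k hk => not_not.1 hk)
  let K : Set ℕ := {k | v k ∉ V}
  let F : Set (Set X) := (fun k => {v k}) '' K
  have hF : F.Finite := by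
    refine hfc F ?_ ?_
    · rintro _ ⟨k, -, rfl⟩
      exact ⟨hv k, singleton_nonempty _⟩
    · intro b
      by_cases hb : b = a
      · refine ⟨V, hb ▸ hV, ?_⟩
        convert Set.finite_empty
        refine Set.eq_empty_of_forall_notMem ?_
        rintro ⟨_, k, hk, rfl⟩ ⟨y, hy, hyV⟩
        rw [mem_singleton_iff.1 hy] at hyV
        exact hk hyV
      · obtain ⟨W, hW, hev⟩ := ha b hb
        refine ⟨W, hW, ?_⟩
        have hfin : {k | v k ∈ W}.Finite := by
          rw [← Nat.cofinite_eq_atTop, eventually_cofinite] at hev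
          simpa using hev
        refine Set.Finite.of_finite_image (f := Subtype.val)
          ((hfin.image fun k => ({v k} : Set X)).subset ?_) Subtype.val_injective.injOn
        rintro _ ⟨⟨_, k, hk, rfl⟩, ⟨y, hy, hyW⟩, rfl⟩
        rw [mem_singleton_iff.1 hy] at hyW
        exact ⟨k, hyW, rfl⟩
  -- the finitely many values outside `V` are all eventually avoided
  have hvals : (v '' K).Finite := by
    refine Set.Finite.of_finite_image (f := fun x => ({x} : Set X)) ?_
      Set.singleton_injective.injOn
    rwa [Set.image_image]
  have hav : ∀ᶠ k in atTop, ∀ b ∈ v '' K, v k ≠ b := by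
    refine (Filter.eventually_all_finite hvals).2 ?_
    rintro _ ⟨j, hj, rfl⟩
    obtain ⟨W, hW, hev⟩ := ha (v j) fun h => hj (h ▸ mem_of_mem_nhds hV)
    filter_upwards [hev] with k hk h
    exact hk (h ▸ mem_of_mem_nhds hW)
  obtain ⟨k, hk, hne⟩ := (hfreq.and_eventually hav).exists
  exact hne _ ⟨k, hk, rfl⟩ rfl

/-- Every feebly compact shift-continuous `T₁`-topology on `𝓘_λ^n`
(`n` a positive integer, `λ` an infinite cardinal) is totally countably pracompact. -/
theorem totallyCountablyPracompact_of_feeblyCompact {γ : Type*} [Infinite γ] {n : ℕ}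
    (hn : 0 < n)
    [TopologicalSpace (SymInvSg γ n)] [T1Space (SymInvSg γ n)]
    (hsc : ShiftContinuous (SymInvSg γ n))
    (hfc : FeeblyCompact (SymInvSg γ n)) :
    TotallyCountablyPracompact (SymInvSg γ n) := by
  have := SymInvSg.t2Space hn hsc
  refine ⟨_, SymInvSg.dense_isolated hn hsc, fun u hu => ?_⟩
  obtain ⟨a, φ, hφ, hlim⟩ := SymInvSg.exists_subseq u
  have ht : Tendsto (u ∘ φ) atTop (𝓝 a) := by
    refine hfc.tendsto_of_isolated (fun k => hu (φ k)) fun b hb => ?_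
    obtain ⟨p, hp⟩ := SymInvSg.exists_mem_not_mem hb
    have hcl := SymInvSg.isClopen_mem hn hsc p
    by_cases hpb : p ∈ b.graph
    · refine ⟨_, hcl.isOpen.mem_nhds hpb, ?_⟩
      filter_upwards [hlim p] with k hk hmem
      exact hp (iff_of_true hpb (hk.1 hmem))
    · refine ⟨_, hcl.compl.isOpen.mem_nhds hpb, ?_⟩
      filter_upwards [hlim p] with k hk hmem
      exact hp (iff_of_false hpb fun h => hmem (hk.2 h))
  exact ⟨φ, hφ, ht.isCompact_insert_range.closure_of_subset (subset_insert _ _)⟩
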